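/- arXiv:2401.03866 — 2 statements merged into one kernel-verified Lean document; each statement's English description precedes it below -/
import Mathlib

section
/- Every letter of the alphabet appears at least once in the democratic sequence: for every a ∈ ℕ there exists n ≥ 1 with u(n) = a. -/
open Filter Finset Topology

/-- The `M`-frequency of the letter `a` in the sequence `u` (indexed from 1):
`λ_M(a) = #{n : 1 ≤ n ≤ M, u n = a} / M`. -/
noncomputable def demoFreq (u : ℕ → ℕ) (M a : ℕ) : ℝ :=
  (((Finset.Icc 1 M).filter fun n => u n = a).card : ℝ) / M

/-- The `M`-deficit of the letter `a`: `D_M(a) = λ(a) - λ_M(a)`. -/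
noncomputable def demoDeficit (lam : ℕ → ℝ) (u : ℕ → ℕ) (M a : ℕ) : ℝ :=
  lam a - demoFreq u M a

/-- `u` is the democratic sequence for the frequencies `lam`: `u 1 = 0`, and for each `M ≥ 1`,
either the maximal deficit at step `M` is positive and `u (M+1)` is the least letter attaining
the maximum of the deficits, or all deficits are nonpositive and `u (M+1) = 0`. -/
def IsDemocratic (lam : ℕ → ℝ) (u : ℕ → ℕ) : Prop :=
  u 1 = 0 ∧
    ∀ M : ℕ, 1 ≤ M →
      ((0 < demoDeficit lam u M (u (M + 1)) ∧
          IsLeast {a : ℕ | ∀ b : ℕ, demoDeficit lam u M b ≤ demoDeficit lam u M a}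
            (u (M + 1))) ∨
        ((∀ a : ℕ, demoDeficit lam u M a ≤ 0) ∧ u (M + 1) = 0))

/-!
If a letter `a` occurred only finitely often, its deficit would tend to `λ(a) > 0`, so from some
step `M₀` on every chosen letter would have deficit at least `ε = λ(a) / 2`. Each letter chosen
after `M₀` then belongs to the finite set `S` of letters with `λ(b) ≥ ε`. Just before the last
choice of `b` in `(M₀, M]` its count is at most `M (λ(b) - ε)`, so up to `M` it is at most
`M (λ(b) - ε) + 1`. Summing over `S` gives `M - M₀ ≤ M (1 - ε |S|) + |S|`, which fails for
large `M`.
-/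

lemma demoFreq_nonneg (u : ℕ → ℕ) (M a : ℕ) : 0 ≤ demoFreq u M a := by
  unfold demoFreq
  positivity

lemma demoDeficit_le (lam : ℕ → ℝ) (u : ℕ → ℕ) (M a : ℕ) : demoDeficit lam u M a ≤ lam a :=
  sub_le_self _ (demoFreq_nonneg u M a)

lemma natCast_mul_demoFreq (u : ℕ → ℕ) (M a : ℕ) :
    M * demoFreq u M a = #{n ∈ Icc 1 M | u n = a} := by
  rcases M.eq_zero_or_pos with rfl | hM
  · simp
  · exact mul_div_cancel₀ _ (Nat.cast_ne_zero.2 hM.ne')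

lemma tendsto_demoFreq_zero_of_eventually_ne {u : ℕ → ℕ} {a : ℕ} (h : ∀ᶠ n in atTop, u n ≠ a) :
    Tendsto (fun M => demoFreq u M a) atTop (𝓝 0) := by
  obtain ⟨N, hN⟩ := eventually_atTop.1 h
  have hcard (M : ℕ) : #{n ∈ Icc 1 M | u n = a} ≤ N := by
    have hsub : {n ∈ Icc 1 M | u n = a} ⊆ range N := fun n hn =>
      mem_range.2 <| lt_of_not_ge fun hNn => hN n hNn (mem_filter.1 hn).2
    simpa using card_le_card hsub
  refine squeeze_zero (fun M => demoFreq_nonneg u M a) (fun M => ?_)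
    (tendsto_const_div_atTop_nhds_zero_nat (N : ℝ))
  unfold demoFreq
  gcongr
  exact hcard M

lemma tendsto_demoDeficit_of_eventually_ne (lam : ℕ → ℝ) {u : ℕ → ℕ} {a : ℕ}
    (h : ∀ᶠ n in atTop, u n ≠ a) :
    Tendsto (fun M => demoDeficit lam u M a) atTop (𝓝 (lam a)) := by
  simpa [demoDeficit] using (tendsto_demoFreq_zero_of_eventually_ne h).const_sub (lam a)

lemma IsDemocratic.demoDeficit_le_demoDeficit_succ {lam : ℕ → ℝ} {u : ℕ → ℕ}
    (hdem : IsDemocratic lam u) {M a : ℕ} (hM : 1 ≤ M) (ha : 0 < demoDeficit lam u M a) :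
    demoDeficit lam u M a ≤ demoDeficit lam u M (u (M + 1)) := by
  rcases hdem.2 M hM with ⟨-, hmax, -⟩ | ⟨hnonpos, -⟩
  · exact hmax a
  · exact absurd ha (hnonpos a).not_gt

section LateChoices

variable {lam : ℕ → ℝ} {u : ℕ → ℕ} {ε : ℝ} {M₀ M : ℕ}

lemma card_filter_Ioc_le_of_le_demoDeficit {b : ℕ} (hb : ε ≤ lam b)
    (hlate : ∀ k ≥ M₀, u (k + 1) = b → ε ≤ demoDeficit lam u k b) (hM : M₀ ≤ M) :
    (#{n ∈ Ioc M₀ M | u n = b} : ℝ) ≤ M * (lam b - ε) + 1 := by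
  induction M, hM using Nat.le_induction with
  | base =>
    rw [Ioc_self, filter_empty, card_empty, Nat.cast_zero]
    exact add_nonneg (mul_nonneg M₀.cast_nonneg (sub_nonneg.2 hb)) zero_le_one
  | succ k hk ih =>
    rw [← insert_Ioc_right_eq_Ioc_add_one hk, filter_insert]
    by_cases hu : u (k + 1) = b
    · have hcount : (#{n ∈ Ioc M₀ k | u n = b} : ℝ) ≤ k * (lam b - ε) := calc
        (#{n ∈ Ioc M₀ k | u n = b} : ℝ) ≤ #{n ∈ Icc 1 k | u n = b} := by
          gcongr
          exact fun n hn => by simp only [mem_Ioc, mem_Icc] at hn ⊢; omega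
        _ = k * demoFreq u k b := (natCast_mul_demoFreq u k b).symm
        _ ≤ k * (lam b - ε) := by
          gcongr
          exact le_sub_comm.1 (hlate k hk hu)
      rw [if_pos hu, card_insert_of_notMem (by simp)]
      push_cast
      linarith
    · rw [if_neg hu]
      push_cast
      linarith

lemma sub_le_of_forall_le_demoDeficit {S : Finset ℕ} (hS : ∀ b, b ∈ S ↔ ε ≤ lam b)
    (hlate : ∀ k ≥ M₀, ε ≤ demoDeficit lam u k (u (k + 1))) (hM : M₀ ≤ M) :
    (M : ℝ) - M₀ ≤ M * (∑ b ∈ S, lam b - #S * ε) + #S := by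
  have hmaps : ∀ n ∈ Ioc M₀ M, u n ∈ S := fun n hn => by
    obtain ⟨k, rfl⟩ := Nat.exists_eq_add_one_of_ne_zero (Nat.ne_zero_of_lt (mem_Ioc.1 hn).1)
    exact (hS _).2 <|
      (hlate k (Nat.lt_succ_iff.1 (mem_Ioc.1 hn).1)).trans (demoDeficit_le lam u k _)
  calc (M : ℝ) - M₀ = #(Ioc M₀ M) := by rw [Nat.card_Ioc, Nat.cast_sub hM]
    _ = ∑ b ∈ S, (#{n ∈ Ioc M₀ M | u n = b} : ℝ) := by
      rw [card_eq_sum_card_fiberwise hmaps, Nat.cast_sum]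
    _ ≤ ∑ b ∈ S, (M * (lam b - ε) + 1) := sum_le_sum fun b hb =>
      card_filter_Ioc_le_of_le_demoDeficit ((hS b).1 hb) (fun k hk hu => hu ▸ hlate k hk) hM
    _ = M * (∑ b ∈ S, lam b - #S * ε) + #S := by
      simp [sum_add_distrib, ← mul_sum]

end LateChoices

lemma frequently_demoDeficit_succ_lt {lam : ℕ → ℝ} (hnonneg : ∀ b, 0 ≤ lam b)
    (hsum : Summable lam) (hle : ∑' b, lam b ≤ 1) (u : ℕ → ℕ) {ε : ℝ} (hε : 0 < ε) :
    ∃ᶠ M in atTop, demoDeficit lam u M (u (M + 1)) < ε := by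
  by_contra h
  obtain ⟨M₀, hlate⟩ : ∃ M₀, ∀ k ≥ M₀, ε ≤ demoDeficit lam u k (u (k + 1)) := by
    simpa only [not_frequently, not_lt, eventually_atTop] using h
  have hfin : {b | ε ≤ lam b}.Finite := by
    simpa only [eventually_cofinite, not_lt] using
      hsum.tendsto_cofinite_zero.eventually_lt_const hε
  obtain ⟨S, hS⟩ : ∃ S : Finset ℕ, ∀ b, b ∈ S ↔ ε ≤ lam b :=
    ⟨hfin.toFinset, fun _ => hfin.mem_toFinset⟩
  have hS_one : (1 : ℝ) ≤ #S := Nat.one_le_cast.2 <| card_pos.2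
    ⟨u (M₀ + 1), (hS _).2 ((hlate M₀ le_rfl).trans (demoDeficit_le lam u M₀ _))⟩
  have hbound (M : ℕ) (hM : M₀ ≤ M) : M * ε ≤ M₀ + #S := by
    have hgap : ∑ b ∈ S, lam b - #S * ε ≤ 1 - ε :=
      sub_le_sub ((hsum.sum_le_tsum S fun b _ => hnonneg b).trans hle)
        (le_mul_of_one_le_left hε.le hS_one)
    have hcount := sub_le_of_forall_le_demoDeficit hS hlate hM
    have hscaled := mul_le_mul_of_nonneg_left hgap M.cast_nonneg
    linarith
  obtain ⟨M, hM, hlarge⟩ := ((eventually_ge_atTop M₀).and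
    ((tendsto_natCast_atTop_atTop.atTop_mul_const hε).eventually_gt_atTop _)).exists
  exact (hbound M hM).not_gt hlarge

theorem democratic_every_letter_appears_general {lam : ℕ → ℝ} {u : ℕ → ℕ}
    (hnonneg : ∀ b, 0 ≤ lam b) (hsum : Summable lam) (hle : ∑' b, lam b ≤ 1)
    (hdem : IsDemocratic lam u) {a : ℕ} (ha : 0 < lam a) :
    ∃ᶠ n in atTop, u n = a := by
  by_contra h
  have hlate : ∀ᶠ M in atTop, lam a / 2 < demoDeficit lam u M a :=
    (tendsto_demoDeficit_of_eventually_ne lam (not_frequently.1 h)).eventually_const_lt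
      (half_lt_self ha)
  obtain ⟨M, hlt, hgt, hM⟩ := ((frequently_demoDeficit_succ_lt hnonneg hsum hle u
    (half_pos ha)).and_eventually (hlate.and (eventually_ge_atTop 1))).exists
  exact (hdem.demoDeficit_le_demoDeficit_succ hM ((half_pos ha).trans hgt)).not_gt (hlt.trans hgt)

/-- Every letter of the alphabet appears at least once in the democratic sequence. -/
theorem democratic_every_letter_appears (lam : ℕ → ℝ) (u : ℕ → ℕ)
    (hpos : ∀ a : ℕ, 0 < lam a) (hsum : HasSum lam 1) (hmono : Antitone lam)
    (hdem : IsDemocratic lam u) :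
    ∀ a : ℕ, ∃ n : ℕ, 1 ≤ n ∧ u n = a := fun a =>
  ((democratic_every_letter_appears_general (fun b => (hpos b).le) hsum.summable hsum.tsum_eq.le
    hdem (hpos a)).and_eventually (eventually_ge_atTop 1)).exists.imp fun _ h => h.symm
end

section
/- No letter has lower frequency strictly smaller than its assigned frequency: for every letter a ∈ ℕ, liminf_{N→∞} (1/N)·#{n : 1 ≤ n ≤ N, u(n) = a} ≥ λ(a). -/
open Filter Finset Topology

/-!
Follow the squared positive parts of the scaled deficits `x_M(a) = M λ(a) - #{n ≤ M : u n = a}`.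
Passing from `M` to `M + 1` adds `λ(a) - 1_{a = u(M+1)}` to `x_M(a)`, so it changes `x_M(a)⁺ ^ 2` by
at most `2 x_M(a)⁺ (λ(a) - 1_{a = u(M+1)}) + (λ(a) - 1_{a = u(M+1)}) ^ 2`. Since `u(M+1)` maximizes
the positive part, replacing `x_M(a)⁺` by this maximum only increases the first term, whose sum over
any set of letters containing `u(M+1)` is then nonpositive because the weights sum to at most `1`.
The second terms sum to at most `2`. Hence `∑ x_M(a)⁺ ^ 2 ≤ 2 M`, and every deficit `x_M(a) / M` is
at most `√(2 / M)`.
-/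

theorem posPart_add_sq_le {R : Type*} [CommRing R] [LinearOrder R] [IsStrictOrderedRing R]
    (x d : R) : (x + d)⁺ ^ 2 ≤ x⁺ ^ 2 + 2 * x⁺ * d + d ^ 2 := by
  rcases le_total (x + d) 0 with hxd | hxd
  · rw [posPart_of_nonpos hxd]
    linarith [sq_nonneg (x⁺ + d)]
  · calc (x + d)⁺ ^ 2 = (x + d) ^ 2 := by rw [posPart_of_nonneg hxd]
      _ ≤ (x⁺ + d) ^ 2 := by gcongr; exact le_posPart x
      _ = x⁺ ^ 2 + 2 * x⁺ * d + d ^ 2 := by ring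

section GreedySequences

variable {α : Type*} [DecidableEq α] {lam : α → ℝ} {u : ℕ → α}

/-- The number of occurrences of the letter `a` among `u 1, …, u M`. -/
def letterCount (u : ℕ → α) (M : ℕ) (a : α) : ℕ :=
  #{n ∈ Icc 1 M | u n = a}

/-- `M` times the `M`-deficit of the letter `a`: the number of occurrences by which `a` lags behind
its prescribed frequency `lam a` after `M` steps. -/
def scaledDeficit (lam : α → ℝ) (u : ℕ → α) (M : ℕ) (a : α) : ℝ :=
  M * lam a - letterCount u M a

/-- The sequence `u` (indexed from 1) is greedy for the weights `lam`: whenever some letter is late,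
the next letter has maximal deficit. Ties, and steps at which no letter is late, are left free. -/
def IsGreedy (lam : α → ℝ) (u : ℕ → α) : Prop :=
  ∀ M a, 0 < scaledDeficit lam u M a →
    scaledDeficit lam u M a ≤ scaledDeficit lam u M (u (M + 1))

theorem letterCount_zero (u : ℕ → α) (a : α) : letterCount u 0 a = 0 := by
  simp [letterCount]

theorem letterCount_succ (u : ℕ → α) (M : ℕ) (a : α) :
    letterCount u (M + 1) a = letterCount u M a + if u (M + 1) = a then 1 else 0 := by
  rw [letterCount, ← insert_Icc_right_eq_Icc_add_one (by lia), filter_insert]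
  split_ifs with h
  · rw [card_insert_of_notMem (by simp), letterCount]
  · rw [letterCount, add_zero]

theorem letterCount_le (u : ℕ → α) (M : ℕ) (a : α) : letterCount u M a ≤ M := by
  simpa [letterCount] using card_filter_le (Icc 1 M) (u · = a)

theorem scaledDeficit_zero (lam : α → ℝ) (u : ℕ → α) (a : α) : scaledDeficit lam u 0 a = 0 := by
  simp [scaledDeficit, letterCount_zero]

theorem scaledDeficit_succ (lam : α → ℝ) (u : ℕ → α) (M : ℕ) (a : α) :
    scaledDeficit lam u (M + 1) a =
      scaledDeficit lam u M a + (lam a - if u (M + 1) = a then 1 else 0) := by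
  simp only [scaledDeficit, letterCount_succ]
  push_cast
  ring

namespace IsGreedy

theorem posPart_scaledDeficit_le (hu : IsGreedy lam u) (M : ℕ) (a : α) :
    (scaledDeficit lam u M a)⁺ ≤ (scaledDeficit lam u M (u (M + 1)))⁺ := by
  rcases le_or_gt (scaledDeficit lam u M a) 0 with hle | hlate
  · rw [posPart_of_nonpos hle]
    exact posPart_nonneg _
  · exact posPart_mono (hu M a hlate)

theorem posPart_scaledDeficit_succ_sq_le (hu : IsGreedy lam u) {a : α} (h₀ : 0 ≤ lam a)
    (h₁ : lam a ≤ 1) (M : ℕ) :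
    (scaledDeficit lam u (M + 1) a)⁺ ^ 2 ≤ (scaledDeficit lam u M a)⁺ ^ 2 +
      2 * (scaledDeficit lam u M (u (M + 1)))⁺ * (lam a - if u (M + 1) = a then 1 else 0) +
      (lam a + if u (M + 1) = a then 1 else 0) := by
  rw [scaledDeficit_succ]
  refine (posPart_add_sq_le _ _).trans (add_le_add (add_le_add_right ?_ _) ?_)
  · split_ifs with h
    · rw [h]
    · rw [sub_zero]
      gcongr
      exact hu.posPart_scaledDeficit_le M a
  · split_ifs <;> nlinarith

theorem sum_posPart_scaledDeficit_sq_le (hu : IsGreedy lam u) (hlam : ∀ a, 0 ≤ lam a)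
    (hsum : ∀ s : Finset α, ∑ a ∈ s, lam a ≤ 1) (M : ℕ) (s : Finset α) :
    ∑ a ∈ s, (scaledDeficit lam u M a)⁺ ^ 2 ≤ 2 * M := by
  have hlam_le_one (a : α) : lam a ≤ 1 := by simpa using hsum {a}
  induction M generalizing s with
  | zero => simp [scaledDeficit_zero]
  | succ M ih =>
    set next := u (M + 1)
    set m := (scaledDeficit lam u M next)⁺
    -- Without the next letter the sum of `lam a - 1_{a = next}` could be positive.
    set t := insert next s
    have hchosen : ∑ a ∈ t, (if next = a then 1 else 0 : ℝ) = 1 := by simp [t]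
    have hdrift : m * (∑ a ∈ t, lam a - 1) ≤ 0 :=
      mul_nonpos_of_nonneg_of_nonpos (posPart_nonneg _) (sub_nonpos.2 (hsum t))
    calc ∑ a ∈ s, (scaledDeficit lam u (M + 1) a)⁺ ^ 2
        ≤ ∑ a ∈ t, (scaledDeficit lam u (M + 1) a)⁺ ^ 2 :=
          sum_le_sum_of_subset_of_nonneg (subset_insert _ _) fun _ _ _ => sq_nonneg _
      _ ≤ ∑ a ∈ t, ((scaledDeficit lam u M a)⁺ ^ 2 +
            2 * m * (lam a - if next = a then 1 else 0) +
            (lam a + if next = a then 1 else 0)) :=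
          sum_le_sum fun a _ => hu.posPart_scaledDeficit_succ_sq_le (hlam a) (hlam_le_one a) M
      _ = ∑ a ∈ t, (scaledDeficit lam u M a)⁺ ^ 2 + 2 * (m * (∑ a ∈ t, lam a - 1)) +
            (∑ a ∈ t, lam a + 1) := by
          rw [sum_add_distrib, sum_add_distrib, ← mul_sum, sum_sub_distrib, sum_add_distrib,
            hchosen, mul_assoc]
      _ ≤ 2 * (M + 1 : ℕ) := by
          push_cast
          linarith [ih t, hsum t]

theorem scaledDeficit_le_sqrt (hu : IsGreedy lam u) (hlam : ∀ a, 0 ≤ lam a)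
    (hsum : ∀ s : Finset α, ∑ a ∈ s, lam a ≤ 1) (M : ℕ) (a : α) :
    scaledDeficit lam u M a ≤ √(2 * M) := by
  refine (le_posPart _).trans (Real.le_sqrt_of_sq_le ?_)
  simpa using hu.sum_posPart_scaledDeficit_sq_le hlam hsum M {a}

theorem sub_sqrt_le_letterCount_div (hu : IsGreedy lam u) (hlam : ∀ a, 0 ≤ lam a)
    (hsum : ∀ s : Finset α, ∑ a ∈ s, lam a ≤ 1) {M : ℕ} (hM : 0 < M) (a : α) :
    lam a - √(2 / M) ≤ letterCount u M a / M := by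
  have hM' : (0 : ℝ) < M := Nat.cast_pos.2 hM
  have hsqrt : √(2 * M) = √(2 / M) * M := by
    rw [← Real.sqrt_sq hM'.le, ← Real.sqrt_mul (by positivity), Real.sqrt_sq hM'.le]
    congr 1
    field_simp
  have hdeficit : M * lam a - letterCount u M a ≤ √(2 / M) * M :=
    hsqrt ▸ hu.scaledDeficit_le_sqrt hlam hsum M a
  rw [le_div_iff₀ hM']
  linarith

end IsGreedy

theorem democratic_liminf_ge_general (hu : IsGreedy lam u) (hlam : ∀ a, 0 ≤ lam a)
    (hsum : ∀ s : Finset α, ∑ a ∈ s, lam a ≤ 1) (a : α) :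
    lam a ≤ liminf (fun N : ℕ => (letterCount u N a : ℝ) / N) atTop := by
  have hlim : Tendsto (fun N : ℕ => lam a - √(2 / N)) atTop (𝓝 (lam a)) := by
    simpa using (tendsto_const_div_atTop_nhds_zero_nat (2 : ℝ)).sqrt.const_sub (lam a)
  have hfreq_le_one (N : ℕ) : (letterCount u N a : ℝ) / N ≤ 1 :=
    div_le_one_of_le₀ (mod_cast letterCount_le u N a) N.cast_nonneg
  rw [← hlim.liminf_eq]
  refine liminf_le_liminf ?_ hlim.isBoundedUnder_ge
    (isBoundedUnder_of ⟨1, hfreq_le_one⟩).isCoboundedUnder_ge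
  filter_upwards [eventually_gt_atTop 0] with N hN
  exact hu.sub_sqrt_le_letterCount_div hlam hsum hN a

end GreedySequences

theorem scaledDeficit_eq_mul_demoDeficit (lam : ℕ → ℝ) (u : ℕ → ℕ) (M a : ℕ) :
    scaledDeficit lam u M a = M * demoDeficit lam u M a := by
  rcases eq_or_ne M 0 with rfl | hM
  · simp [scaledDeficit_zero]
  · simp only [scaledDeficit, letterCount, demoDeficit, demoFreq]
    field_simp

theorem IsDemocratic.isGreedy {lam : ℕ → ℝ} {u : ℕ → ℕ} (hu : IsDemocratic lam u) :
    IsGreedy lam u := by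
  intro M a hlate
  rcases M.eq_zero_or_pos with rfl | hM
  · simp only [scaledDeficit_zero, le_refl]
  simp only [scaledDeficit_eq_mul_demoDeficit] at hlate ⊢
  rcases hu.2 M hM with ⟨-, hleast⟩ | ⟨hnone, -⟩
  · exact mul_le_mul_of_nonneg_left (hleast.1 a) M.cast_nonneg
  · exact absurd (pos_of_mul_pos_right hlate M.cast_nonneg) (hnone a).not_gt

/-- No letter has lower frequency strictly smaller than its assigned frequency. -/
theorem democratic_liminf_ge (lam : ℕ → ℝ) (u : ℕ → ℕ)
    (hpos : ∀ a : ℕ, 0 < lam a) (hsum : HasSum lam 1) (hmono : Antitone lam)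
    (hdem : IsDemocratic lam u) :
    ∀ a : ℕ, lam a ≤ Filter.liminf (fun N : ℕ => demoFreq u N a) atTop :=
  democratic_liminf_ge_general hdem.isGreedy (fun a => (hpos a).le)
    fun s => sum_le_hasSum s (fun a _ => (hpos a).le) hsum
end
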